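/- Let a ∈ M_n(ℚ̄F_∞), regarded as an element of M_n(ℂF_∞) via the inclusion ℚ̄ ⊂ ℂ. Then there exists a constant m ∈ ℝ such that for every trace φ on F_∞ with φ(1) = 1 satisfying Lück's condition, (φ ⊗ Tr_n)(ln_+|a|) ≥ m. -/

import Mathlib

open scoped ComplexOrder ENNReal
open Filter Topology Matrix

set_option synthInstance.maxHeartbeats 1000000
set_option maxHeartbeats 1000000

noncomputable section

instance piLpCompleteSpace {ι : Type*} [Fintype ι] (p : ℝ≥0∞) (β : ι → Type*)
    [∀ i, UniformSpace (β i)] [∀ i, CompleteSpace (β i)] : CompleteSpace (PiLp p β) :=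
  PiLp.completeSpace p β

/-- `φ : G → ℂ` is of positive type: for every finite family `g₁, …, g_m` of elements of
`G`, the matrix `(φ (gᵢ⁻¹ gⱼ))_{i,j}` is positive semidefinite. -/
def IsPosType {G : Type*} [Group G] (φ : G → ℂ) : Prop :=
  ∀ (m : ℕ) (g : Fin m → G), (Matrix.of fun i j => φ ((g i)⁻¹ * g j)).PosSemidef

/-- A trace on a (discrete) group: a function of positive type, constant on conjugacy
classes. -/
def IsGroupTrace {G : Type*} [Group G] (φ : G → ℂ) : Prop :=
  IsPosType φ ∧ ∀ g h : G, φ (h * g * h⁻¹) = φ g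

/-- GNS representation data for a function `φ` on a group `G`: a Hilbert space `H`, a
unital algebra morphism `π` from `ℂG = MonoidAlgebra ℂ G` to the bounded operators on `H`
sending group elements to unitaries (this is the condition `star_of`), and a cyclic vector
`ξ` whose matrix coefficient is (the linear extension of) `φ`. -/
structure GNSRep (G : Type*) [Group G] (φ : G → ℂ) where
  H : Type
  [instNormed : NormedAddCommGroup H]
  [instInner : InnerProductSpace ℂ H]
  [instComplete : CompleteSpace H]
  π : MonoidAlgebra ℂ G →ₐ[ℂ] (H →L[ℂ] H)
  ξ : H
  star_of : ∀ g : G, star (π (MonoidAlgebra.of ℂ G g)) = π (MonoidAlgebra.of ℂ G g⁻¹)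
  inner_eq : ∀ g : G, (inner ℂ ξ (π (MonoidAlgebra.of ℂ G g) ξ) : ℂ) = φ g
  cyclic : Dense (Set.range fun x : MonoidAlgebra ℂ G => π x ξ)

attribute [instance] GNSRep.instNormed GNSRep.instInner GNSRep.instComplete

/-- The vector `ξᵢ ∈ Hⁿ`: the cyclic vector `ξ` in the `i`-th summand, `0` elsewhere. -/
def GNSRep.vec {G : Type*} [Group G] {φ : G → ℂ} (R : GNSRep G φ) {n : ℕ} (i : Fin n) :
    PiLp 2 (fun _ : Fin n => R.H) :=
  (PiLp.continuousLinearEquiv 2 ℂ (fun _ : Fin n => R.H)).symm (Pi.single i R.ξ)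

/-- `|x| = (x* x)^{1/2}`, via the continuous functional calculus. -/
def cfcAbs {A : Type*} [CStarAlgebra A] (x : A) : A := cfc Real.sqrt (star x * x)

/-- The set of continuous majorants of `ln₊` on `[0,∞)`.  (Recall that `Real.log 0 = 0`,
so that `Real.log` agrees with `ln₊` on `[0,∞)`.) -/
def lnPlusMajorants : Set (ℝ → ℝ) :=
  {g | ContinuousOn g (Set.Ici 0) ∧ ∀ t ∈ Set.Ici (0:ℝ), Real.log t ≤ g t}

/-- The action of a matrix `a ∈ Mₙ(R)` on the Hilbert space `H'ⁿ` (with its `ℓ²` inner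
product) induced by a morphism `π : R → B(H')`: `(π_n(a) v)_i = Σ_j π(a i j) (v j)`. -/
def matAct {R H' : Type*} [Ring R] [Algebra ℂ R] [NormedAddCommGroup H']
    [InnerProductSpace ℂ H'] {n : ℕ}
    (π : R →ₐ[ℂ] (H' →L[ℂ] H')) (a : Matrix (Fin n) (Fin n) R) :
    PiLp 2 (fun _ : Fin n => H') →L[ℂ] PiLp 2 (fun _ : Fin n => H') :=
  (PiLp.continuousLinearEquiv 2 ℂ _).symm.toContinuousLinearMap ∘L
    (ContinuousLinearMap.pi fun i => ∑ j, (π (a i j)).comp (ContinuousLinearMap.proj j)) ∘L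
    (PiLp.continuousLinearEquiv 2 ℂ _).toContinuousLinearMap

/-- `(φ ⊗ Trₙ)(ln₊ |a|) := inf { Σᵢ ⟨ξᵢ, g(|π(a)|) ξᵢ⟩ : g : [0,∞) → ℝ continuous, g ≥ ln₊ }`,
an element of `ℝ ∪ {−∞}`, computed in the GNS representation `R`. -/
def GNSRep.lnPlusQ {G : Type*} [Group G] {φ : G → ℂ} (R : GNSRep G φ) {n : ℕ}
    (a : Matrix (Fin n) (Fin n) (MonoidAlgebra ℂ G)) : EReal :=
  ⨅ g ∈ lnPlusMajorants,
    ((∑ i, (inner ℂ (R.vec i) (cfc g (cfcAbs (matAct R.π a)) (R.vec i)) : ℂ)).re : EReal)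

/-- A function `φ` on `G` satisfies Lück's condition if `(φ ⊗ Trₙ)(ln₊|a|) ≥ 0` for every
`n ≥ 1` and every `a ∈ Mₙ(ℤG)` (an `a ∈ Mₙ(ℂG)` whose coefficients are all integers),
where the quantity is computed in any GNS representation of `φ`. -/
def SatisfiesLueck {G : Type*} [Group G] (φ : G → ℂ) : Prop :=
  ∀ (n : ℕ), 0 < n → ∀ a : Matrix (Fin n) (Fin n) (MonoidAlgebra ℂ G),
    (∀ (i j : Fin n) (g : G), ∃ m : ℤ, (a i j).coeff g = (m : ℂ)) →
    ∀ R : GNSRep G φ, 0 ≤ R.lnPlusQ a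

/-! Let `K` be a number field containing the coefficients of `a`, with complex embeddings
`σ₁, …, σᵣ`, the first of which is the inclusion. The block diagonal matrix `Δ` of the conjugates
`σₖ a` becomes integral after multiplication on both sides by invertible scalar matrices, namely
by the matrix `(σₖ bᵢ)` attached to a basis `b` of `K` and by its transpose: the entries become
traces from `K` to `ℚ`, whose denominators are bounded.

Lück's condition applies to the integral matrix, and has to be transported back to `Δ`. Given a
continuous majorant of `ln₊`, one inserts below it, up to a bounded error, a combination of
rescaled copies of `log (1 + s)` and `1 - (1 + s)⁻¹` that is itself a majorant of `ln₊`. Both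
functions are operator monotone, so multiplying by fixed invertible matrices changes
their traces by no more than a rescaling of `s`, which costs a bounded amount independent of `φ`.
The sum over `k` of the regularised terms of `σₖ a` is therefore bounded below. The terms of the
conjugates other than `a` are bounded above, uniformly in `φ`, because the operator norm of a matrix
over `ℂG` is bounded uniformly in `φ`; hence the term of `a` is bounded below. -/

section FunctionalCalculus

lemma cfc_cfcAbs {A : Type*} [CStarAlgebra A] {g : ℝ → ℝ} (hg : ContinuousOn g (Set.Ici 0))
    (a : A) : cfc g (cfcAbs a) = cfc (fun s => g (√s)) (star a * a) := by
  refine (cfc_comp' g Real.sqrt (star a * a) (hg.mono ?_)).symm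
  rintro _ ⟨s, -, rfl⟩
  exact Real.sqrt_nonneg s

lemma continuousOn_comp_const_mul {f : ℝ → ℝ} (hf : ContinuousOn f (Set.Ici 0)) {c : ℝ}
    (hc : 0 ≤ c) : ContinuousOn (fun s => f (c * s)) (Set.Ici 0) :=
  hf.comp (by fun_prop) fun _ hs => mul_nonneg hc hs

variable {A B : Type*} [CStarAlgebra A] [PartialOrder A] [StarOrderedRing A]
  [CStarAlgebra B] [PartialOrder B] [StarOrderedRing B]

lemma spectrum_subset_Icc_zero_norm {a : A} (ha : 0 ≤ a) : spectrum ℝ a ⊆ Set.Icc 0 ‖a‖ := by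
  nontriviality A
  exact fun s hs => ⟨spectrum_nonneg_of_nonneg ha hs,
    (Real.le_norm_self s).trans (spectrum.norm_le_norm_of_mem hs)⟩

lemma continuousOn_spectrum_of_nonneg {f : ℝ → ℝ} (hf : ContinuousOn f (Set.Ici 0)) {a : A}
    (ha : 0 ≤ a) : ContinuousOn f (spectrum ℝ a) :=
  hf.mono fun _ hs => spectrum_nonneg_of_nonneg ha hs

lemma cfc_const_mul_eq_cfc_smul {f : ℝ → ℝ} (hf : ContinuousOn f (Set.Ici 0)) {c : ℝ}
    (hc : 0 ≤ c) {a : A} (ha : 0 ≤ a) : cfc (fun s => f (c * s)) a = cfc f (c • a) := by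
  refine cfc_comp_const_mul c f a (hf.mono ?_)
  rintro _ ⟨s, hs, rfl⟩
  exact mul_nonneg hc (spectrum_nonneg_of_nonneg ha hs)

lemma exists_polynomial_tendstoUniformlyOn_Icc {f : ℝ → ℝ} {a b : ℝ}
    (hf : ContinuousOn f (Set.Icc a b)) :
    ∃ p : ℕ → Polynomial ℝ,
      TendstoUniformlyOn (fun k x => (p k).eval x) f atTop (Set.Icc a b) := by
  choose p hp using fun k : ℕ =>
    exists_polynomial_near_of_continuousOn a b f hf (1 / (k + 1)) Nat.one_div_pos_of_nat
  refine ⟨p, Metric.tendstoUniformlyOn_iff.2 fun ε hε => ?_⟩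
  filter_upwards [tendsto_one_div_add_atTop_nhds_zero_nat.eventually_lt_const hε] with k hk x hx
  rw [dist_comm, Real.dist_eq]
  exact (hp k x hx).trans hk

lemma tendsto_aeval_cfc {f : ℝ → ℝ} {r : ℝ} {p : ℕ → Polynomial ℝ}
    (hp : TendstoUniformlyOn (fun k x => (p k).eval x) f atTop (Set.Icc 0 r)) {a : A}
    (ha : 0 ≤ a) (har : ‖a‖ ≤ r) :
    Tendsto (fun k => Polynomial.aeval a (p k)) atTop (𝓝 (cfc f a)) := by
  simp only [← cfc_polynomial (R := ℝ) _ a ha.isSelfAdjoint]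
  refine tendsto_cfc_fun (hp.mono ?_) (.of_forall fun k => (p k).continuous.continuousOn)
  exact (spectrum_subset_Icc_zero_norm ha).trans (Set.Icc_subset_Icc_right har)

lemma apply_cfc_eq_of_apply_pow_eq {a : A} {b : B} (ha : 0 ≤ a) (hb : 0 ≤ b)
    {L : A →L[ℝ] ℝ} {L' : B →L[ℝ] ℝ} (h : ∀ k : ℕ, L (a ^ k) = L' (b ^ k)) {f : ℝ → ℝ}
    (hf : ContinuousOn f (Set.Ici 0)) : L (cfc f a) = L' (cfc f b) := by
  obtain ⟨p, hp⟩ := exists_polynomial_tendstoUniformlyOn_Icc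
    (hf.mono (Set.Icc_subset_Ici_self : Set.Icc 0 (max ‖a‖ ‖b‖) ⊆ _))
  have hpoly (q : Polynomial ℝ) : L (Polynomial.aeval a q) = L' (Polynomial.aeval b q) := by
    simp only [Polynomial.aeval_eq_sum_range, map_sum, map_smul, h]
  have hL := (L.continuous.tendsto _).comp (tendsto_aeval_cfc hp ha (le_max_left _ _))
  have hL' := (L'.continuous.tendsto _).comp (tendsto_aeval_cfc hp hb (le_max_right _ _))
  exact tendsto_nhds_unique hL (hL'.congr fun k => (hpoly (p k)).symm)

lemma monotoneOn_cfc_comp_const_mul {f : ℝ → ℝ} (hf : ContinuousOn f (Set.Ici 0))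
    (hmono : MonotoneOn (cfc f) (Set.Ici (0 : A))) {c : ℝ} (hc : 0 ≤ c) :
    MonotoneOn (cfc fun s => f (c * s)) (Set.Ici (0 : A)) := by
  intro a ha b hb hab
  rw [cfc_const_mul_eq_cfc_smul hf hc ha, cfc_const_mul_eq_cfc_smul hf hc hb]
  exact hmono (smul_nonneg hc ha) (smul_nonneg hc hb) (smul_le_smul_of_nonneg_left hab hc)

lemma continuousOn_log_one_add : ContinuousOn (fun s : ℝ => Real.log (1 + s)) (Set.Ici 0) :=
  ContinuousOn.log (by fun_prop) fun s (hs : 0 ≤ s) => by positivity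

lemma continuousOn_one_sub_one_add_inv :
    ContinuousOn (fun s : ℝ => 1 - (1 + s)⁻¹) (Set.Ici 0) :=
  continuousOn_const.sub (ContinuousOn.inv₀ (by fun_prop) fun s (hs : 0 ≤ s) => by positivity)

lemma monotoneOn_cfc_log_one_add :
    MonotoneOn (cfc fun s : ℝ => Real.log (1 + s)) (Set.Ici (0 : A)) := by
  have hcfc {a : A} (ha : 0 ≤ a) : cfc (fun s : ℝ => Real.log (1 + s)) a = CFC.log (1 + a) := by
    have hlog : ContinuousOn Real.log ((fun s : ℝ => 1 + s) '' spectrum ℝ a) := by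
      rintro _ ⟨s, hs, rfl⟩
      have hs0 := spectrum_nonneg_of_nonneg ha hs
      exact (Real.continuousAt_log (by positivity)).continuousWithinAt
    rw [cfc_comp' Real.log (fun s : ℝ => 1 + s) a hlog, cfc_const_add (1 : ℝ) _ a, cfc_id' ℝ a,
      map_one, CFC.log]
  intro a ha b hb hab
  rw [hcfc ha, hcfc hb]
  exact CFC.log_le_log (add_le_add_right hab 1) (isStrictlyPositive_one.add_nonneg ha)

lemma monotoneOn_cfc_one_sub_one_add_inv :
    MonotoneOn (cfc fun s : ℝ => 1 - (1 + s)⁻¹) (Set.Ici (0 : A)) := by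
  refine CFC.monotoneOn_one_sub_one_add_inv_real.congr fun a ha => cfcₙ_eq_cfc ?_
  exact continuousOn_one_sub_one_add_inv.mono fun s hs => quasispectrum_nonneg_of_nonneg a ha s hs

lemma cfc_star_mul_self_le_cfc_star_mul_self {f g : ℝ → ℝ} (hf : ContinuousOn f (Set.Ici 0))
    (hg : ContinuousOn g (Set.Ici 0)) {a : A} {r : ℝ} (ha : ‖a‖ ≤ r)
    (hfg : ∀ t ∈ Set.Icc 0 r, f (t ^ 2) ≤ g (t ^ 2)) :
    cfc f (star a * a) ≤ cfc g (star a * a) := by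
  have hpos := star_mul_self_nonneg a
  refine cfc_mono (fun s hs => ?_) (continuousOn_spectrum_of_nonneg hf hpos)
    (continuousOn_spectrum_of_nonneg hg hpos)
  obtain ⟨hs0, hsa⟩ := spectrum_subset_Icc_zero_norm hpos hs
  rw [CStarRing.norm_star_mul_self, ← sq] at hsa
  simpa only [Real.sq_sqrt hs0] using
    hfg (√s) ⟨Real.sqrt_nonneg s, (Real.sqrt_le_left (norm_nonneg a)).2 hsa |>.trans ha⟩

section Tracial

variable {S : StarSubalgebra ℂ A} {τ : A →L[ℝ] ℝ} {f : ℝ → ℝ}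

lemma apply_cfc_star_mul_self_eq_mul_star_self (hτ : ∀ x ∈ S, ∀ y ∈ S, τ (x * y) = τ (y * x))
    (hf : ContinuousOn f (Set.Ici 0)) {x : A} (hx : x ∈ S) :
    τ (cfc f (star x * x)) = τ (cfc f (x * star x)) := by
  refine apply_cfc_eq_of_apply_pow_eq (star_mul_self_nonneg x) (mul_star_self_nonneg x)
    (fun k => ?_) hf
  cases k with
  | zero => simp only [pow_zero]
  | succ k =>
    have hxS : star x ∈ S := star_mem hx
    calc τ ((star x * x) ^ (k + 1)) = τ ((star x * x) ^ k * star x * x) := by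
          rw [pow_succ, mul_assoc]
      _ = τ (x * ((star x * x) ^ k * star x)) :=
          hτ _ (mul_mem (pow_mem (mul_mem hxS hx) k) hxS) _ hx
      _ = τ ((x * star x) ^ (k + 1)) := by rw [mul_pow_mul, ← mul_assoc, ← pow_succ']

lemma apply_cfc_star_mul_self_mul_left_le (hτm : Monotone τ) (hf : ContinuousOn f (Set.Ici 0))
    (hmono : MonotoneOn (cfc f) (Set.Ici (0 : A))) {x z : A} {c : ℝ} (hx : ‖x‖ ^ 2 ≤ c) :
    τ (cfc f (star (x * z) * (x * z))) ≤ τ (cfc (fun s => f (c * s)) (star z * z)) := by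
  have hc : 0 ≤ c := (sq_nonneg _).trans hx
  have hle : star (x * z) * (x * z) ≤ c • (star z * z) :=
    calc star (x * z) * (x * z) = star z * (star x * x) * z := by
          rw [star_mul]; simp only [mul_assoc]
      _ ≤ star z * algebraMap ℝ A c * z := star_left_conjugate_le_conjugate
          (CStarAlgebra.star_mul_le_algebraMap_norm_sq.trans (algebraMap_mono A hx)) z
      _ = c • (star z * z) := by
          rw [Algebra.algebraMap_eq_smul_one, mul_smul_comm, mul_one, smul_mul_assoc]
  rw [cfc_const_mul_eq_cfc_smul hf hc (star_mul_self_nonneg z)]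
  exact hτm (hmono (star_mul_self_nonneg _) (smul_nonneg hc (star_mul_self_nonneg z)) hle)

lemma apply_cfc_star_mul_self_mul_right_le (hτm : Monotone τ)
    (hτ : ∀ x ∈ S, ∀ y ∈ S, τ (x * y) = τ (y * x)) (hf : ContinuousOn f (Set.Ici 0))
    (hmono : MonotoneOn (cfc f) (Set.Ici (0 : A))) {z y : A} (hz : z ∈ S) (hy : y ∈ S) {c : ℝ}
    (hyc : ‖y‖ ^ 2 ≤ c) :
    τ (cfc f (star (z * y) * (z * y))) ≤ τ (cfc (fun s => f (c * s)) (star z * z)) := by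
  have hc : 0 ≤ c := (sq_nonneg _).trans hyc
  have hfc := continuousOn_comp_const_mul hf hc
  rw [← norm_star] at hyc
  have hle := apply_cfc_star_mul_self_mul_left_le hτm hf hmono (z := star z) hyc
  rwa [← star_mul, star_star, star_star,
    ← apply_cfc_star_mul_self_eq_mul_star_self hτ hf (mul_mem hz hy),
    ← apply_cfc_star_mul_self_eq_mul_star_self hτ hfc hz] at hle

lemma apply_cfc_star_mul_self_mul_mul_le (hτm : Monotone τ)
    (hτ : ∀ x ∈ S, ∀ y ∈ S, τ (x * y) = τ (y * x)) (hf : ContinuousOn f (Set.Ici 0))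
    (hmono : MonotoneOn (cfc f) (Set.Ici (0 : A))) {x z y : A} (hz : z ∈ S) (hy : y ∈ S)
    {c d : ℝ} (hxc : ‖x‖ ^ 2 ≤ c) (hyd : ‖y‖ ^ 2 ≤ d) :
    τ (cfc f (star (x * z * y) * (x * z * y))) ≤
      τ (cfc (fun s => f (c * d * s)) (star z * z)) := by
  have hc : 0 ≤ c := (sq_nonneg _).trans hxc
  have hfc := continuousOn_comp_const_mul hf hc
  simp only [mul_assoc]
  exact (apply_cfc_star_mul_self_mul_left_le hτm hf hmono hxc).trans
    (apply_cfc_star_mul_self_mul_right_le hτm hτ hfc (monotoneOn_cfc_comp_const_mul hf hmono hc)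
      hz hy hyd)

end Tracial

end FunctionalCalculus

section RegularisedLog

/-- A regularisation of `½ log s`, built from the operator monotone functions `log (1 + s)` and
`1 - (1 + s)⁻¹`. For `κ = 1` and `1 ≤ p` it majorises `ln₊` at `s = t²`; as the second function
enters with a negative sign, its argument carries `κ⁻¹` where that of the first carries `κ`, so
that a distortion of `s` by the factor `κ` can only increase `regLog`. -/
def regLog (κ p q s : ℝ) : ℝ :=
  (Real.log (1 + p * (κ * s)) - Real.log p * (1 - (1 + q * (κ⁻¹ * s))⁻¹)) / 2

variable {κ p q : ℝ}

lemma continuousOn_regLog (hκ : 0 ≤ κ) (hp : 0 ≤ p) (hq : 0 ≤ q) :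
    ContinuousOn (regLog κ p q) (Set.Ici 0) := by
  have hlog : ContinuousOn (fun s => Real.log (1 + p * (κ * s))) (Set.Ici 0) :=
    ContinuousOn.log (by fun_prop) fun s (hs : 0 ≤ s) => by positivity
  have hinv : ContinuousOn (fun s => (1 + q * (κ⁻¹ * s))⁻¹) (Set.Ici 0) :=
    ContinuousOn.inv₀ (by fun_prop) fun s (hs : 0 ≤ s) => by positivity
  exact (hlog.sub (continuousOn_const.mul (continuousOn_const.sub hinv))).div_const 2

lemma log_le_regLog_one_sq (hp : 1 ≤ p) (hq : 0 ≤ q) {t : ℝ} (ht : 0 ≤ t) :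
    Real.log t ≤ regLog 1 p q (t ^ 2) := by
  rcases ht.eq_or_lt with rfl | ht
  · simp [regLog]
  have hlog : Real.log p + 2 * Real.log t ≤ Real.log (1 + p * t ^ 2) := by
    have hpt : Real.log (p * t ^ 2) ≤ Real.log (1 + p * t ^ 2) :=
      Real.log_le_log (by positivity) (by linarith)
    rwa [Real.log_mul (by positivity) (by positivity), Real.log_pow, Nat.cast_ofNat] at hpt
  have hinv : Real.log p * (1 - (1 + q * t ^ 2)⁻¹) ≤ Real.log p :=
    mul_le_of_le_one_right (Real.log_nonneg hp) (sub_le_self 1 (by positivity))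
  simp only [regLog, inv_one, one_mul]
  linarith

lemma regLog_one_sq_mem_lnPlusMajorants (hp : 1 ≤ p) (hq : 0 ≤ q) :
    (fun t => regLog 1 p q (t ^ 2)) ∈ lnPlusMajorants :=
  ⟨(continuousOn_regLog zero_le_one (zero_le_one.trans hp) hq).comp (by fun_prop)
    fun t _ => sq_nonneg t, fun _ ht => log_le_regLog_one_sq hp hq ht⟩

-- With this choice of `p` and `q` both terms of `regLog` depend on `t` through `t / r` only, and
-- for `r ≤ t` the second one is within `1` of `log p`.
lemma regLog_sq_le_log_add {r t : ℝ} (hκ : 0 < κ) (hr : 0 < r) (hκr : κ * r ^ 2 ≤ 1)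
    (hrt : r ≤ t) :
    regLog κ (κ * r ^ 2)⁻¹ (κ * Real.log (κ * r ^ 2)⁻¹ / r ^ 2) (t ^ 2) ≤
      Real.log t + (1 + Real.log κ / 2) := by
  have ht : 0 < t := hr.trans_le hrt
  have hratio : 1 ≤ t ^ 2 / r ^ 2 := (one_le_div (by positivity)).2 (by gcongr)
  have hp0 : 0 ≤ Real.log (κ * r ^ 2)⁻¹ := Real.log_nonneg ((one_le_inv₀ (by positivity)).2 hκr)
  have hp : Real.log (κ * r ^ 2)⁻¹ = -(Real.log κ + 2 * Real.log r) := by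
    rw [Real.log_inv, Real.log_mul hκ.ne' (by positivity), Real.log_pow, Nat.cast_ofNat]
  have hlog : Real.log (1 + t ^ 2 / r ^ 2) ≤ Real.log 2 + 2 * Real.log t - 2 * Real.log r :=
    calc Real.log (1 + t ^ 2 / r ^ 2) ≤ Real.log (2 * t ^ 2 / r ^ 2) :=
          Real.log_le_log (by positivity) (by rw [mul_div_assoc]; linarith)
      _ = Real.log 2 + 2 * Real.log t - 2 * Real.log r := by
          rw [Real.log_div (by positivity) (by positivity),
            Real.log_mul two_ne_zero (by positivity), Real.log_pow, Real.log_pow, Nat.cast_ofNat]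
  set l := Real.log (κ * r ^ 2)⁻¹
  have hinv : l * (1 + l * (t ^ 2 / r ^ 2))⁻¹ ≤ 1 := by
    rw [← div_eq_mul_inv, div_le_one (by positivity)]
    linarith [le_mul_of_one_le_right hp0 hratio]
  have hpκ : (κ * r ^ 2)⁻¹ * (κ * t ^ 2) = t ^ 2 / r ^ 2 := by field_simp
  have hqκ : κ * l / r ^ 2 * (κ⁻¹ * t ^ 2) = l * (t ^ 2 / r ^ 2) := by field_simp
  rw [regLog, hpκ, hqκ]
  linarith [Real.log_two_lt_d9]

lemma regLog_sq_le_half {r t : ℝ} (hκ : 0 < κ) (hr : 0 < r) (hκr : κ * r ^ 2 ≤ 1) (ht : 0 ≤ t)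
    (htr : t ≤ r) (hq : 0 ≤ q) : regLog κ (κ * r ^ 2)⁻¹ q (t ^ 2) ≤ 1 / 2 := by
  have hlog : Real.log (1 + (κ * r ^ 2)⁻¹ * (κ * t ^ 2)) ≤ Real.log 2 := by
    have hratio : (κ * r ^ 2)⁻¹ * (κ * t ^ 2) ≤ 1 := by
      rw [inv_mul_le_one₀ (by positivity)]
      gcongr
    exact Real.log_le_log (by positivity) (by linarith)
  have hsub : 0 ≤ Real.log (κ * r ^ 2)⁻¹ * (1 - (1 + q * (κ⁻¹ * t ^ 2))⁻¹) :=
    mul_nonneg (Real.log_nonneg ((one_le_inv₀ (by positivity)).2 hκr))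
      (sub_nonneg.2 (inv_le_one_of_one_le₀ (le_add_of_nonneg_right (by positivity))))
  rw [regLog]
  linarith [Real.log_two_lt_d9]

lemma exists_neg_half_le_of_mem_lnPlusMajorants {g : ℝ → ℝ} (hg : g ∈ lnPlusMajorants) :
    ∃ r, 0 < r ∧ κ * r ^ 2 ≤ 1 ∧ ∀ t, 0 ≤ t → t < r → -(1 / 2) ≤ g t := by
  have hg0 : -(1 / 2) < g 0 := by
    have h0 := hg.2 0 Set.self_mem_Ici
    rw [Real.log_zero] at h0
    linarith
  have hg_ev : ∀ᶠ t in 𝓝[≥] (0 : ℝ), -(1 / 2) < g t :=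
    (hg.1 0 Set.self_mem_Ici).eventually_const_lt hg0
  have hκ_ev : ∀ᶠ t in 𝓝[≥] (0 : ℝ), κ * t ^ 2 < 1 := by
    have hcont : Continuous fun t : ℝ => κ * t ^ 2 := by fun_prop
    exact (hcont.continuousWithinAt (x := 0)).eventually_lt_const (by simp)
  obtain ⟨u, hu, hsub⟩ := mem_nhdsGE_iff_exists_Ico_subset.1 (hg_ev.and hκ_ev)
  have hu2 : u / 2 < u := half_lt_self hu
  exact ⟨u / 2, half_pos hu, (hsub ⟨(half_pos hu).le, hu2⟩).2.le,
    fun t ht htu => (hsub ⟨ht, htu.trans hu2⟩).1.le⟩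

lemma exists_regLog_sq_le {g : ℝ → ℝ} (hg : g ∈ lnPlusMajorants) (hκ : 1 ≤ κ) {M : ℝ}
    (hM : 1 ≤ M) :
    ∃ p q : ℝ, 1 ≤ p ∧ 0 ≤ q ∧ ∀ t ∈ Set.Icc 0 M,
      regLog κ p q (t ^ 2) ≤ g t + (1 + Real.log κ / 2) ∧
      regLog κ p q (t ^ 2) ≤ Real.log M + (1 + Real.log κ / 2) := by
  have hκ0 : 0 < κ := zero_lt_one.trans_le hκ
  have hlogκ : 0 ≤ Real.log κ := Real.log_nonneg hκ
  have hlogM : 0 ≤ Real.log M := Real.log_nonneg hM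
  obtain ⟨r, hr, hκr, hgr⟩ := exists_neg_half_le_of_mem_lnPlusMajorants (κ := κ) hg
  have hp : 1 ≤ (κ * r ^ 2)⁻¹ := (one_le_inv₀ (by positivity)).2 hκr
  have hq : 0 ≤ κ * Real.log (κ * r ^ 2)⁻¹ / r ^ 2 :=
    div_nonneg (mul_nonneg hκ0.le (Real.log_nonneg hp)) (sq_nonneg r)
  refine ⟨_, _, hp, hq, fun t ht => ?_⟩
  rcases lt_or_ge t r with htr | hrt
  · have hle := regLog_sq_le_half hκ0 hr hκr ht.1 htr.le hq
    have hgt := hgr t ht.1 htr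
    constructor <;> linarith
  · have hle := regLog_sq_le_log_add hκ0 hr hκr hrt
    have hgt := hg.2 t ht.1
    have hMt := Real.log_le_log (hr.trans_le hrt) ht.2
    constructor <;> linarith

section Tracial

variable {A : Type*} [CStarAlgebra A] [PartialOrder A] [StarOrderedRing A] {τ : A →L[ℝ] ℝ}

lemma apply_cfc_regLog (hκ : 0 ≤ κ) (hp : 0 ≤ p) (hq : 0 ≤ q) {a : A} (ha : 0 ≤ a) :
    τ (cfc (regLog κ p q) a) =
      (τ (cfc (fun s => Real.log (1 + p * (κ * s))) a) -
        Real.log p * τ (cfc (fun s => 1 - (1 + q * (κ⁻¹ * s))⁻¹) a)) / 2 := by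
  have hlog := continuousOn_spectrum_of_nonneg (continuousOn_comp_const_mul
    (continuousOn_comp_const_mul continuousOn_log_one_add hp) hκ) ha
  have hinv := continuousOn_spectrum_of_nonneg (continuousOn_comp_const_mul
    (continuousOn_comp_const_mul continuousOn_one_sub_one_add_inv hq) (inv_nonneg.2 hκ)) ha
  have hlinv := (continuousOn_const (c := Real.log p)).fun_mul hinv
  have hdef : regLog κ p q = fun s => 2⁻¹ * (Real.log (1 + p * (κ * s)) -
      Real.log p * (1 - (1 + q * (κ⁻¹ * s))⁻¹)) := funext fun s => div_eq_inv_mul _ _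
  rw [hdef, div_eq_inv_mul, cfc_const_mul _ _ a (hlog.fun_sub hlinv),
    cfc_sub _ _ a hlog hlinv, cfc_const_mul _ _ a hinv, map_smul, map_sub, map_smul,
    smul_eq_mul, smul_eq_mul]

lemma apply_cfc_regLog_star_mul_self_le {S : StarSubalgebra ℂ A} (hτm : Monotone τ)
    (hτ : ∀ x ∈ S, ∀ y ∈ S, τ (x * y) = τ (y * x)) {x x' y y' z : A}
    (hxx' : x' * x = 1) (hyy' : y * y' = 1) (hx : x ∈ S) (hz : z ∈ S) (hy : y ∈ S) (hy' : y' ∈ S)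
    {c : ℝ} (hc : 1 ≤ c) (hxc : ‖x‖ ^ 2 ≤ c) (hyc : ‖y‖ ^ 2 ≤ c) (hxc' : ‖x'‖ ^ 2 ≤ c)
    (hyc' : ‖y'‖ ^ 2 ≤ c) (hp : 1 ≤ p) (hq : 0 ≤ q) :
    τ (cfc (regLog 1 p q) (star (x * z * y) * (x * z * y))) ≤
      τ (cfc (regLog (c * c) p q) (star z * z)) := by
  have hp0 : 0 ≤ p := zero_le_one.trans hp
  have hcc : 0 < c * c := by positivity
  set w := x * z * y
  have hw : w ∈ S := mul_mem (mul_mem hx hz) hy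
  have hzw : z = x' * w * y' := by
    simp only [w, ← mul_assoc, hxx', one_mul, mul_assoc z, hyy', mul_one]
  have hlog := apply_cfc_star_mul_self_mul_mul_le hτm hτ
    (continuousOn_comp_const_mul continuousOn_log_one_add hp0)
    (monotoneOn_cfc_comp_const_mul continuousOn_log_one_add monotoneOn_cfc_log_one_add hp0)
    hz hy hxc hyc
  have hinv := apply_cfc_star_mul_self_mul_mul_le hτm hτ
    (continuousOn_comp_const_mul (continuousOn_comp_const_mul continuousOn_one_sub_one_add_inv hq)
      (inv_nonneg.2 hcc.le))
    (monotoneOn_cfc_comp_const_mul (continuousOn_comp_const_mul continuousOn_one_sub_one_add_inv hq)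
      (monotoneOn_cfc_comp_const_mul continuousOn_one_sub_one_add_inv
        monotoneOn_cfc_one_sub_one_add_inv hq) (inv_nonneg.2 hcc.le))
    hw hy' hxc' hyc'
  simp only [← hzw, inv_mul_cancel_left₀ hcc.ne'] at hinv
  rw [apply_cfc_regLog zero_le_one hp0 hq (star_mul_self_nonneg w),
    apply_cfc_regLog hcc.le hp0 hq (star_mul_self_nonneg z)]
  simp only [inv_one, one_mul]
  gcongr
  exact Real.log_nonneg hp

end Tracial

end RegularisedLog

section VectorFunctional

variable {E : Type*} [NormedAddCommGroup E] [InnerProductSpace ℂ E]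

/-- The real part `T ↦ re ⟪v, T v⟫` of the vector functional of `v`. -/
def vecFunctional (v : E) : (E →L[ℂ] E) →L[ℝ] ℝ :=
  Complex.reCLM ∘L ((innerSL ℂ v) ∘L (ContinuousLinearMap.apply ℂ E v)).restrictScalars ℝ

lemma vecFunctional_apply (v : E) (T : E →L[ℂ] E) :
    vecFunctional v T = (inner ℂ v (T v)).re := rfl

lemma monotone_vecFunctional (v : E) : Monotone (vecFunctional v) := by
  intro S T hST
  have h := (ContinuousLinearMap.le_def S T).1 hST |>.re_inner_nonneg_right v
  rw [_root_.sub_apply, inner_sub_right, map_sub, sub_nonneg] at h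
  exact h

end VectorFunctional

section MatrixAction

variable {R H' : Type*} [Ring R] [Algebra ℂ R] [NormedAddCommGroup H'] [InnerProductSpace ℂ H']
  {n : ℕ} (π : R →ₐ[ℂ] (H' →L[ℂ] H'))

lemma matAct_apply (a : Matrix (Fin n) (Fin n) R) (v : PiLp 2 fun _ : Fin n => H') (i : Fin n) :
    matAct π a v i = ∑ j, π (a i j) (v j) := by
  simp [matAct]

lemma matAct_one : matAct π (1 : Matrix (Fin n) (Fin n) R) = 1 := by
  ext v i
  rw [matAct_apply, Finset.sum_eq_single i (fun j _ hj => by simp [Matrix.one_apply_ne hj.symm])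
    (by simp), Matrix.one_apply_eq, map_one]
  rfl

lemma matAct_mul (a b : Matrix (Fin n) (Fin n) R) :
    matAct π (a * b) = matAct π a * matAct π b := by
  ext v i
  simp only [mul_apply_eq_comp, matAct_apply, Matrix.mul_apply, map_sum, map_mul,
    _root_.sum_apply]
  exact Finset.sum_comm

/-- `matAct π` as an algebra morphism. -/
def matActHom : Matrix (Fin n) (Fin n) R →ₐ[ℂ]
    ((PiLp 2 fun _ : Fin n => H') →L[ℂ] PiLp 2 fun _ : Fin n => H') :=
  AlgHom.ofLinearMap
    { toFun := matAct π
      map_add' a b := by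
        ext v i
        simp [matAct_apply, Finset.sum_add_distrib]
      map_smul' c a := by
        ext v i
        simp [matAct_apply, Finset.smul_sum] }
    (matAct_one π) (matAct_mul π)

lemma matActHom_apply (a : Matrix (Fin n) (Fin n) R) : matActHom π a = matAct π a := rfl

variable {π}

lemma star_matAct [CompleteSpace H'] {a a' : Matrix (Fin n) (Fin n) R}
    (h : ∀ i j, star (π (a i j)) = π (a' j i)) : star (matAct π a) = matAct π a' := by
  rw [ContinuousLinearMap.star_eq_adjoint, eq_comm, ContinuousLinearMap.eq_adjoint_iff]
  intro v w
  simp only [PiLp.inner_apply, matAct_apply, sum_inner, inner_sum]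
  rw [Finset.sum_comm]
  refine Finset.sum_congr rfl fun j _ => Finset.sum_congr rfl fun i _ => ?_
  rw [← h, ContinuousLinearMap.star_eq_adjoint, ContinuousLinearMap.adjoint_inner_left]

lemma norm_matAct_le (a : Matrix (Fin n) (Fin n) R) :
    ‖matAct π a‖ ≤ ∑ i, ∑ j, ‖π (a i j)‖ := by
  refine ContinuousLinearMap.opNorm_le_bound _ (by positivity) fun v => ?_
  calc ‖matAct π a v‖ ≤ ∑ i, ‖matAct π a v i‖ := by
        rw [PiLp.norm_eq_of_L2]
        exact Real.sqrt_le_iff.2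
          ⟨by positivity, Finset.sum_sq_le_sq_sum_of_nonneg fun i _ => norm_nonneg _⟩
    _ ≤ ∑ i, ∑ j, ‖π (a i j)‖ * ‖v‖ := by
        refine Finset.sum_le_sum fun i _ => ?_
        rw [matAct_apply]
        exact norm_sum_le_of_le _ fun j _ =>
          (π (a i j)).le_opNorm_of_le (PiLp.norm_apply_le v j)
    _ = (∑ i, ∑ j, ‖π (a i j)‖) * ‖v‖ := by simp only [Finset.sum_mul]

end MatrixAction

namespace GNSRep

variable {G : Type*} [Group G] {φ : G → ℂ}

section Norm

lemma norm_π_of_le_one (R : GNSRep G φ) (g : G) : ‖R.π (MonoidAlgebra.of ℂ G g)‖ ≤ 1 := by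
  have hunitary : star (R.π (MonoidAlgebra.of ℂ G g)) * R.π (MonoidAlgebra.of ℂ G g) = 1 := by
    rw [R.star_of, ← map_mul, ← map_mul, inv_mul_cancel, map_one, map_one]
  have hsq := CStarRing.norm_star_mul_self (x := R.π (MonoidAlgebra.of ℂ G g))
  rw [hunitary] at hsq
  exact (le_abs_self _).trans
    (abs_le_one_iff_mul_self_le_one.2 (hsq ▸ ContinuousLinearMap.norm_id_le))

lemma exists_norm_π_le (x : MonoidAlgebra ℂ G) :
    ∃ c : ℝ, ∀ (φ : G → ℂ) (R : GNSRep G φ), ‖R.π x‖ ≤ c := by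
  induction x using MonoidAlgebra.induction_linear with
  | zero => exact ⟨0, fun φ R => by simp⟩
  | add x y hx hy =>
    obtain ⟨c, hc⟩ := hx
    obtain ⟨d, hd⟩ := hy
    exact ⟨c + d, fun φ R => by rw [map_add]; exact norm_add_le_of_le (hc φ R) (hd φ R)⟩
  | single g z =>
    refine ⟨‖z‖, fun φ R => ?_⟩
    rw [← MonoidAlgebra.smul_of, map_smul, norm_smul]
    exact mul_le_of_le_one_right (norm_nonneg z) (R.norm_π_of_le_one g)

lemma exists_norm_matAct_le {ι : Type*} [Finite ι] {n : ℕ}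
    (a : ι → Matrix (Fin n) (Fin n) (MonoidAlgebra ℂ G)) :
    ∃ c : ℝ, 1 ≤ c ∧ ∀ (φ : G → ℂ) (R : GNSRep G φ) (i : ι), ‖matAct R.π (a i)‖ ≤ c := by
  choose c hc using exists_norm_π_le (G := G)
  obtain ⟨M, hM⟩ := (Set.finite_range fun k => ∑ i, ∑ j, c (a k i j)).bddAbove
  refine ⟨max 1 M, le_max_left 1 M, fun φ R k => ?_⟩
  calc ‖matAct R.π (a k)‖ ≤ ∑ i, ∑ j, ‖R.π (a k i j)‖ := norm_matAct_le (a k)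
    _ ≤ ∑ i, ∑ j, c (a k i j) := by gcongr; exact hc _ φ R
    _ ≤ max 1 M := (hM (Set.mem_range_self k)).trans (le_max_right 1 M)

end Norm

variable (R : GNSRep G φ)

lemma exists_π_eq_star (x : MonoidAlgebra ℂ G) : ∃ y, R.π y = star (R.π x) := by
  induction x using MonoidAlgebra.induction_linear with
  | zero => exact ⟨0, by simp⟩
  | add x y hx hy =>
    obtain ⟨x', hx'⟩ := hx
    obtain ⟨y', hy'⟩ := hy
    exact ⟨x' + y', by rw [map_add, map_add, star_add, hx', hy']⟩
  | single g z =>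
    exact ⟨star z • MonoidAlgebra.of ℂ G g⁻¹, by
      rw [← MonoidAlgebra.smul_of, map_smul, map_smul, star_smul, R.star_of]⟩

lemma exists_matAct_eq_star {n : ℕ} (a : Matrix (Fin n) (Fin n) (MonoidAlgebra ℂ G)) :
    ∃ b, matAct R.π b = star (matAct R.π a) := by
  choose adj hadj using R.exists_π_eq_star
  exact ⟨fun i j => adj (a j i), (star_matAct fun i j => (hadj (a i j)).symm).symm⟩

/-- The star algebra of operators on `Hⁿ` coming from `Mₙ(ℂG)`. -/
def matActStarSubalgebra (n : ℕ) :
    StarSubalgebra ℂ ((PiLp 2 fun _ : Fin n => R.H) →L[ℂ] PiLp 2 fun _ : Fin n => R.H) where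
  toSubalgebra := (matActHom R.π).range
  star_mem' := by
    rintro _ ⟨a, rfl⟩
    exact R.exists_matAct_eq_star a

lemma matAct_mem_matActStarSubalgebra {n : ℕ}
    (a : Matrix (Fin n) (Fin n) (MonoidAlgebra ℂ G)) :
    matAct R.π a ∈ R.matActStarSubalgebra n := ⟨a, rfl⟩

/-- The linear extension of `φ` to `ℂG`, computed in the representation `R`. -/
def linExt : MonoidAlgebra ℂ G →ₗ[ℂ] ℂ :=
  ((innerSL ℂ R.ξ) ∘L (ContinuousLinearMap.apply ℂ R.H R.ξ)).toLinearMap ∘ₗ R.π.toLinearMap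

lemma linExt_apply (x : MonoidAlgebra ℂ G) : R.linExt x = inner ℂ R.ξ (R.π x R.ξ) := rfl

lemma linExt_of (g : G) : R.linExt (MonoidAlgebra.of ℂ G g) = φ g := R.inner_eq g

lemma linExt_mul_comm (hφ : ∀ g h : G, φ (h * g * h⁻¹) = φ g) (x y : MonoidAlgebra ℂ G) :
    R.linExt (x * y) = R.linExt (y * x) := by
  induction x using MonoidAlgebra.induction_linear with
  | zero => simp only [zero_mul, mul_zero]
  | add x x' hx hx' => simp only [add_mul, mul_add, map_add, hx, hx']
  | single g z =>
    induction y using MonoidAlgebra.induction_linear with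
    | zero => simp only [zero_mul, mul_zero]
    | add y y' hy hy' => simp only [add_mul, mul_add, map_add, hy, hy']
    | single h w =>
      have hconj : φ (g * h) = φ (h * g) := by
        rw [← hφ (g * h) h]
        group
      simp only [← MonoidAlgebra.smul_of, smul_mul_smul_comm, ← map_mul, map_smul, linExt_of,
        hconj, mul_comm z w]

lemma inner_vec_matAct_vec {n : ℕ} (a : Matrix (Fin n) (Fin n) (MonoidAlgebra ℂ G)) (i : Fin n) :
    inner ℂ (R.vec i) (matAct R.π a (R.vec i)) = R.linExt (a i i) := by
  have hvec (j : Fin n) : R.vec i j = if j = i then R.ξ else 0 := by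
    simp only [GNSRep.vec, PiLp.coe_symm_continuousLinearEquiv, Pi.single_apply]
  rw [PiLp.inner_apply, Finset.sum_eq_single i (fun j _ hj => by simp [hvec, hj]) (by simp),
    matAct_apply, Finset.sum_eq_single i (fun j _ hj => by simp [hvec, hj]) (by simp), hvec,
    if_pos rfl, linExt_apply]

/-- The real part of the trace functional `φ ⊗ Trₙ` on the operators on `Hⁿ`. -/
def traceFunctional (n : ℕ) :
    ((PiLp 2 fun _ : Fin n => R.H) →L[ℂ] PiLp 2 fun _ : Fin n => R.H) →L[ℝ] ℝ :=
  ∑ i, vecFunctional (R.vec i)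

lemma traceFunctional_apply {n : ℕ}
    (T : (PiLp 2 fun _ : Fin n => R.H) →L[ℂ] PiLp 2 fun _ : Fin n => R.H) :
    R.traceFunctional n T = ∑ i, vecFunctional (R.vec i) T :=
  _root_.sum_apply _ _ _

lemma monotone_traceFunctional (n : ℕ) : Monotone (R.traceFunctional n) := by
  intro S T hST
  simp only [traceFunctional_apply]
  exact Finset.sum_le_sum fun i _ => monotone_vecFunctional _ hST

lemma traceFunctional_matAct {n : ℕ} (a : Matrix (Fin n) (Fin n) (MonoidAlgebra ℂ G)) :
    R.traceFunctional n (matAct R.π a) = (R.linExt a.trace).re := by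
  simp only [traceFunctional_apply, vecFunctional_apply, inner_vec_matAct_vec, Matrix.trace,
    Matrix.diag_apply, map_sum, Complex.re_sum]

lemma traceFunctional_one (h1 : φ 1 = 1) (n : ℕ) : R.traceFunctional n 1 = n := by
  have hone : R.linExt 1 = 1 := by rw [← map_one (MonoidAlgebra.of ℂ G), linExt_of, h1]
  rw [← map_one (matActHom R.π), matActHom_apply, traceFunctional_matAct]
  rw [Matrix.trace_one, Fintype.card_fin, ← nsmul_one, map_nsmul, hone, nsmul_one,
    Complex.natCast_re]

lemma traceFunctional_mul_comm (hφ : ∀ g h : G, φ (h * g * h⁻¹) = φ g) {n : ℕ} :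
    ∀ S ∈ R.matActStarSubalgebra n, ∀ T ∈ R.matActStarSubalgebra n,
      R.traceFunctional n (S * T) = R.traceFunctional n (T * S) := by
  rintro _ ⟨a, rfl⟩ _ ⟨b, rfl⟩
  change R.traceFunctional n (matAct R.π a * matAct R.π b) =
    R.traceFunctional n (matAct R.π b * matAct R.π a)
  simp only [← matAct_mul, traceFunctional_matAct, Matrix.trace, Matrix.diag_apply,
    Matrix.mul_apply, map_sum, R.linExt_mul_comm hφ (a _ _)]
  rw [Finset.sum_comm]

lemma coe_le_lnPlusQ_iff {n : ℕ} (a : Matrix (Fin n) (Fin n) (MonoidAlgebra ℂ G)) (m : ℝ) :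
    (m : EReal) ≤ R.lnPlusQ a ↔ ∀ g ∈ lnPlusMajorants,
      m ≤ R.traceFunctional n
        (cfc (fun s => g (√s)) (star (matAct R.π a) * matAct R.π a)) := by
  rw [GNSRep.lnPlusQ, le_iInf₂_iff]
  refine forall₂_congr fun g hg => ?_
  rw [EReal.coe_le_coe_iff, cfc_cfcAbs hg.1, traceFunctional_apply, Complex.re_sum]
  rfl

end GNSRep

section BlockDiagonal

/-- The block diagonal matrix with blocks `D 0, …, D (r - 1)`, as a ring morphism. -/
def finBlockDiagonal (n r : ℕ) (R : Type*) [Semiring R] :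
    (Fin r → Matrix (Fin n) (Fin n) R) →+* Matrix (Fin (n * r)) (Fin (n * r)) R :=
  (Matrix.reindexRingEquiv R finProdFinEquiv).toRingHom.comp
    (Matrix.blockDiagonalRingHom (Fin n) (Fin r) R)

lemma finBlockDiagonal_apply_finProdFinEquiv {n r : ℕ} {R : Type*} [Semiring R]
    (D : Fin r → Matrix (Fin n) (Fin n) R) (p q : Fin n × Fin r) :
    finBlockDiagonal n r R D (finProdFinEquiv p) (finProdFinEquiv q) =
      Matrix.blockDiagonal D p q := by
  change Matrix.blockDiagonal D (finProdFinEquiv.symm (finProdFinEquiv p))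
    (finProdFinEquiv.symm (finProdFinEquiv q)) = _
  rw [Equiv.symm_apply_apply, Equiv.symm_apply_apply]

/-- The block matrix `(W i j • 1)`, ordered compatibly with `finBlockDiagonal`. -/
def scalarBlock (n r : ℕ) (K R : Type*) [CommSemiring K] [Semiring R] [Algebra K R] :
    Matrix (Fin r) (Fin r) K →* Matrix (Fin (n * r)) (Fin (n * r)) R where
  toFun W := Matrix.reindexRingEquiv R finProdFinEquiv
    ((algebraMap K R).mapMatrix
      (Matrix.kroneckerMap (· * ·) (1 : Matrix (Fin n) (Fin n) K) W))
  map_one' := by rw [Matrix.one_kronecker_one, map_one, map_one]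
  map_mul' W V := by
    rw [← map_mul, ← map_mul, ← Matrix.mul_kronecker_mul, one_mul]

lemma scalarBlock_apply_finProdFinEquiv {n r : ℕ} {K R : Type*} [CommSemiring K] [Semiring R]
    [Algebra K R] (W : Matrix (Fin r) (Fin r) K) (p q : Fin n × Fin r) :
    scalarBlock n r K R W (finProdFinEquiv p) (finProdFinEquiv q) =
      if p.1 = q.1 then algebraMap K R (W p.2 q.2) else 0 := by
  change algebraMap K R (Matrix.kroneckerMap (· * ·) (1 : Matrix (Fin n) (Fin n) K) W
    (finProdFinEquiv.symm (finProdFinEquiv p)) (finProdFinEquiv.symm (finProdFinEquiv q))) = _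
  rw [Equiv.symm_apply_apply, Equiv.symm_apply_apply, Matrix.kroneckerMap_apply, Matrix.one_apply,
    ite_mul, one_mul, zero_mul, apply_ite (algebraMap K R), map_zero]

lemma scalarBlock_mul_finBlockDiagonal_mul_scalarBlock_apply {n r : ℕ} {K R : Type*}
    [CommSemiring K] [Semiring R] [Algebra K R] (W V : Matrix (Fin r) (Fin r) K)
    (D : Fin r → Matrix (Fin n) (Fin n) R) (p q : Fin n × Fin r) :
    (scalarBlock n r K R W * finBlockDiagonal n r R D * scalarBlock n r K R V)
      (finProdFinEquiv p) (finProdFinEquiv q) =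
      ∑ k, (W p.2 k * V k q.2) • D k p.1 q.1 := by
  simp only [Matrix.mul_apply, ← finProdFinEquiv.sum_comp, scalarBlock_apply_finProdFinEquiv,
    finBlockDiagonal_apply_finProdFinEquiv, Matrix.blockDiagonal_apply, Fintype.sum_prod_type,
    ite_mul, mul_ite, zero_mul, mul_zero, Finset.sum_ite_irrel, Finset.sum_const_zero,
    Finset.sum_ite_eq, Finset.sum_ite_eq', Finset.mem_univ, if_true]
  refine Finset.sum_congr rfl fun k _ => ?_
  rw [← Algebra.smul_def, ← Algebra.commutes, ← Algebra.smul_def, smul_smul, mul_comm]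

end BlockDiagonal

namespace GNSRep

variable {G : Type*} [Group G] {φ : G → ℂ} (R : GNSRep G φ) {n r : ℕ}

lemma exists_forall_star_matAct_finBlockDiagonal
    (D : Fin r → Matrix (Fin n) (Fin n) (MonoidAlgebra ℂ G)) :
    ∃ D' : Fin r → Matrix (Fin n) (Fin n) (MonoidAlgebra ℂ G),
      (∀ k, star (matAct R.π (D k)) = matAct R.π (D' k)) ∧
      star (matAct R.π (finBlockDiagonal n r _ D)) = matAct R.π (finBlockDiagonal n r _ D') := by
  choose adj hadj using R.exists_π_eq_star
  refine ⟨fun k => Matrix.of fun i j => adj (D k j i),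
    fun k => star_matAct fun i j => (hadj _).symm, star_matAct ?_⟩
  simp only [← finProdFinEquiv.forall_congr_right, finBlockDiagonal_apply_finProdFinEquiv,
    Matrix.blockDiagonal_apply, Matrix.of_apply]
  intro p q
  by_cases h : p.2 = q.2
  · rw [if_pos h, if_pos h.symm, hadj, h]
  · rw [if_neg h, if_neg (Ne.symm h), map_zero, star_zero]

lemma vecFunctional_cfc_finBlockDiagonal
    (D : Fin r → Matrix (Fin n) (Fin n) (MonoidAlgebra ℂ G)) {f : ℝ → ℝ}
    (hf : ContinuousOn f (Set.Ici 0)) (i : Fin n) (k : Fin r) :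
    vecFunctional (R.vec (finProdFinEquiv (i, k)))
        (cfc f (star (matAct R.π (finBlockDiagonal n r _ D)) *
          matAct R.π (finBlockDiagonal n r _ D))) =
      vecFunctional (R.vec i) (cfc f (star (matAct R.π (D k)) * matAct R.π (D k))) := by
  refine apply_cfc_eq_of_apply_pow_eq (star_mul_self_nonneg _) (star_mul_self_nonneg _)
    (fun l => ?_) hf
  obtain ⟨D', hD', hblock⟩ := R.exists_forall_star_matAct_finBlockDiagonal D
  rw [hD', hblock, ← matAct_mul, ← matAct_mul, ← map_mul]
  simp only [← matActHom_apply, ← map_pow]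
  simp only [matActHom_apply, vecFunctional_apply, inner_vec_matAct_vec,
    finBlockDiagonal_apply_finProdFinEquiv, Matrix.blockDiagonal_apply_eq, Pi.pow_apply,
    Pi.mul_apply]

lemma traceFunctional_cfc_finBlockDiagonal
    (D : Fin r → Matrix (Fin n) (Fin n) (MonoidAlgebra ℂ G)) {f : ℝ → ℝ}
    (hf : ContinuousOn f (Set.Ici 0)) :
    R.traceFunctional (n * r) (cfc f (star (matAct R.π (finBlockDiagonal n r _ D)) *
        matAct R.π (finBlockDiagonal n r _ D))) =
      ∑ k, R.traceFunctional n (cfc f (star (matAct R.π (D k)) * matAct R.π (D k))) := by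
  simp only [traceFunctional_apply, ← finProdFinEquiv.sum_comp, Fintype.sum_prod_type,
    R.vecFunctional_cfc_finBlockDiagonal D hf]
  exact Finset.sum_comm

end GNSRep

section NumberField

variable {K : Type*} [Field K] [NumberField K] {r : ℕ}

lemma isUnit_embeddingsMatrixReindex (b : Module.Basis (Fin r) ℚ K) (e : Fin r ≃ (K →ₐ[ℚ] ℂ)) :
    IsUnit (Algebra.embeddingsMatrixReindex ℚ ℂ b e) := by
  rw [Matrix.isUnit_iff_isUnit_det, isUnit_iff_ne_zero, ← pow_ne_zero_iff two_ne_zero,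
    ← Algebra.discr_eq_det_embeddingsMatrixReindex_pow_two, map_ne_zero]
  exact Algebra.discr_not_zero_of_basis ℚ b

lemma sum_embeddings_mul_mul_eq_trace (e : Fin r ≃ (K →ₐ[ℚ] ℂ)) (x z y : K) :
    ∑ k, e k x * e k z * e k y = algebraMap ℚ ℂ (Algebra.trace ℚ K (x * z * y)) := by
  simp only [trace_eq_sum_embeddings ℂ, ← e.sum_comp, map_mul]

lemma exists_int_mul_sum_embeddings (e : Fin r ≃ (K →ₐ[ℚ] ℂ)) (b : Fin r → K) {S : Set K}
    (hS : S.Finite) : ∃ d : ℤ, d ≠ 0 ∧ ∀ z ∈ S, ∀ i j, ∃ m : ℤ,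
      d * ∑ k, e k (b i) * e k z * e k (b j) = (m : ℂ) := by
  have := hS.to_subtype
  obtain ⟨d, hd⟩ := IsLocalization.exist_integer_multiples_of_finite (nonZeroDivisors ℤ)
    fun p : S × Fin r × Fin r => Algebra.trace ℚ K (b p.2.1 * p.1 * b p.2.2)
  refine ⟨d, nonZeroDivisors.ne_zero d.2, fun z hz i j => ?_⟩
  obtain ⟨m, hm⟩ := hd (⟨z, hz⟩, i, j)
  refine ⟨m, ?_⟩
  have hmℂ := congrArg (algebraMap ℚ ℂ) hm
  rw [eq_intCast, map_intCast] at hmℂ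
  rw [sum_embeddings_mul_mul_eq_trace, hmℂ, map_zsmul, zsmul_eq_mul]

-- Multiplying `diag (σ₁ z, …, σᵣ z)` on the left by the matrix `(σₖ bᵢ)` of a basis `b` and on the
-- right by its transpose produces the traces of `bᵢ z bⱼ`.
lemma exists_units_sum_embeddings_eq_intCast (e : Fin r ≃ (K →ₐ[ℚ] ℂ)) {S : Set K}
    (hS : S.Finite) : ∃ W V : (Matrix (Fin r) (Fin r) ℂ)ˣ, ∀ z ∈ S, ∀ i j, ∃ m : ℤ,
      ∑ k, W.val i k * V.val k j * e k z = (m : ℂ) := by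
  have hr : Module.finrank ℚ K = r := by
    rw [← AlgHom.card ℚ K ℂ, ← Fintype.card_congr e, Fintype.card_fin]
  let b := Module.finBasisOfFinrankEq ℚ K hr
  obtain ⟨d, hd, hint⟩ := exists_int_mul_sum_embeddings e b hS
  have hE := isUnit_embeddingsMatrixReindex b e
  have hET := (Matrix.isUnit_transpose _).2 hE
  refine ⟨Units.mk0 (d : ℂ) (Int.cast_ne_zero.2 hd) • hE.unit, hET.unit, fun z hz i j => ?_⟩
  obtain ⟨m, hm⟩ := hint z hz i j
  refine ⟨m, ?_⟩
  rw [← hm, Finset.mul_sum]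
  refine Finset.sum_congr rfl fun k _ => ?_
  change (d * e k (b i)) * e k (b j) * e k z = d * (e k (b i) * e k z * e k (b j))
  ring

end NumberField

section IntegralModel

variable {n : ℕ}

section Coefficients

variable {R G : Type*} [Semiring R]

/-- The set of all coefficients of the entries of a matrix over a monoid algebra. -/
def coeffSet (a : Matrix (Fin n) (Fin n) (MonoidAlgebra R G)) : Set R :=
  {z | ∃ i j g, (a i j).coeff g = z}

lemma coeff_mem_coeffSet (a : Matrix (Fin n) (Fin n) (MonoidAlgebra R G)) (i j : Fin n) (g : G) :
    (a i j).coeff g ∈ coeffSet a := ⟨i, j, g, rfl⟩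

lemma finite_coeffSet (a : Matrix (Fin n) (Fin n) (MonoidAlgebra R G)) : (coeffSet a).Finite := by
  refine (Set.finite_iUnion fun p : Fin n × Fin n =>
    Finsupp.finite_range (a p.1 p.2).coeff).subset ?_
  rintro _ ⟨i, j, g, rfl⟩
  exact Set.mem_iUnion.2 ⟨(i, j), g, rfl⟩

end Coefficients

variable {G : Type*} [Monoid G]

/-- All coefficients of the entries of a matrix over `ℂG` are integers, that is, the matrix lies
in `Mₙ(ℤG)`. -/
def HasIntegerCoeff (a : Matrix (Fin n) (Fin n) (MonoidAlgebra ℂ G)) : Prop :=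
  ∀ (i j : Fin n) (g : G), ∃ m : ℤ, (a i j).coeff g = (m : ℂ)

lemma exists_numberField_mapMatrix_eq {a : Matrix (Fin n) (Fin n) (MonoidAlgebra ℂ G)}
    (ha : ∀ i j g, IsAlgebraic ℚ ((a i j).coeff g)) :
    ∃ K : IntermediateField ℚ ℂ, NumberField K ∧
      ∃ a' : Matrix (Fin n) (Fin n) (MonoidAlgebra K G),
        (MonoidAlgebra.mapRingHom G (algebraMap K ℂ)).mapMatrix a' = a := by
  have : Finite (coeffSet a) := finite_coeffSet a
  have hint : ∀ z ∈ coeffSet a, IsIntegral ℚ z := by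
    rintro _ ⟨i, j, g, rfl⟩
    exact (ha i j g).isIntegral
  let K := IntermediateField.adjoin ℚ (coeffSet a)
  have hK : FiniteDimensional ℚ K := IntermediateField.finiteDimensional_adjoin hint
  have hlift (i j) : ∃ x, MonoidAlgebra.map (algebraMap K ℂ : K →+ ℂ) x = a i j := by
    rw [← Set.mem_range, MonoidAlgebra.range_map]
    exact fun g => ⟨⟨_, IntermediateField.subset_adjoin ℚ _ (coeff_mem_coeffSet a i j g)⟩, rfl⟩
  choose a' ha' using hlift
  exact ⟨K, ⟨⟩, Matrix.of a', Matrix.ext ha'⟩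

lemma exists_units_hasIntegerCoeff_of_numberField {K : Type*} [Field K] [NumberField K]
    (σ : K →+* ℂ) (a : Matrix (Fin n) (Fin n) (MonoidAlgebra K G)) :
    ∃ (r : ℕ) (D : Fin r → Matrix (Fin n) (Fin n) (MonoidAlgebra ℂ G))
      (X Y : (Matrix (Fin (n * r)) (Fin (n * r)) (MonoidAlgebra ℂ G))ˣ),
      (MonoidAlgebra.mapRingHom G σ).mapMatrix a ∈ Set.range D ∧
        HasIntegerCoeff (X.val * finBlockDiagonal n r _ D * Y.val) := by
  let e := (Fintype.equivFin (K →ₐ[ℚ] ℂ)).symm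
  obtain ⟨W, V, hWV⟩ := exists_units_sum_embeddings_eq_intCast e (finite_coeffSet a)
  refine ⟨_, fun k => (MonoidAlgebra.mapRingHom G (e k : K →+* ℂ)).mapMatrix a,
    Units.map (scalarBlock n _ ℂ _) W, Units.map (scalarBlock n _ ℂ _) V,
    ⟨e.symm σ.toRatAlgHom, ?_⟩, ?_⟩
  · dsimp only
    rw [Equiv.apply_symm_apply]
    rfl
  · rw [HasIntegerCoeff]
    simp only [← finProdFinEquiv.forall_congr_right]
    intro p q g
    obtain ⟨m, hm⟩ := hWV _ (coeff_mem_coeffSet a p.1 q.1 g) p.2 q.2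
    refine ⟨m, ?_⟩
    rw [← hm, Units.coe_map, Units.coe_map,
      scalarBlock_mul_finBlockDiagonal_mul_scalarBlock_apply, MonoidAlgebra.coeff_sum,
      Finsupp.finsetSum_apply]
    refine Finset.sum_congr rfl fun k _ => ?_
    rw [MonoidAlgebra.coeff_smul, Finsupp.smul_apply, RingHom.mapMatrix_apply, Matrix.map_apply,
      MonoidAlgebra.coeff_mapRingHom, smul_eq_mul]
    rfl

lemma exists_units_hasIntegerCoeff_mul_finBlockDiagonal_mul
    {a : Matrix (Fin n) (Fin n) (MonoidAlgebra ℂ G)}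
    (ha : ∀ i j g, IsAlgebraic ℚ ((a i j).coeff g)) :
    ∃ (r : ℕ) (D : Fin r → Matrix (Fin n) (Fin n) (MonoidAlgebra ℂ G))
      (X Y : (Matrix (Fin (n * r)) (Fin (n * r)) (MonoidAlgebra ℂ G))ˣ),
      a ∈ Set.range D ∧ HasIntegerCoeff (X.val * finBlockDiagonal n r _ D * Y.val) := by
  obtain ⟨K, hK, a', rfl⟩ := exists_numberField_mapMatrix_eq ha
  exact exists_units_hasIntegerCoeff_of_numberField (algebraMap K ℂ) a'

end IntegralModel

lemma SatisfiesLueck.zero_le_lnPlusQ {G : Type*} [Group G] {φ : G → ℂ} (hφ : SatisfiesLueck φ)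
    {N : ℕ} {a : Matrix (Fin N) (Fin N) (MonoidAlgebra ℂ G)} (ha : HasIntegerCoeff a)
    (R : GNSRep G φ) : 0 ≤ R.lnPlusQ a := by
  obtain rfl | hN := N.eq_zero_or_pos
  · simp [GNSRep.lnPlusQ]
  · exact hφ N hN a ha R

namespace GNSRep

variable {G : Type*} [Group G] {φ : G → ℂ} (R : GNSRep G φ) {n r : ℕ}

lemma traceFunctional_cfc_le (h1 : φ 1 = 1) {f g : ℝ → ℝ} {c M : ℝ}
    (hf : ContinuousOn f (Set.Ici 0)) (hg : ContinuousOn g (Set.Ici 0))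
    {T : (PiLp 2 fun _ : Fin n => R.H) →L[ℂ] PiLp 2 fun _ : Fin n => R.H} (hT : ‖T‖ ≤ M)
    (hfg : ∀ t ∈ Set.Icc 0 M, f (t ^ 2) ≤ g (t ^ 2) + c) :
    R.traceFunctional n (cfc f (star T * T)) ≤
      R.traceFunctional n (cfc g (star T * T)) + c * n := by
  calc R.traceFunctional n (cfc f (star T * T))
      ≤ R.traceFunctional n (cfc (fun s => g s + c) (star T * T)) :=
        R.monotone_traceFunctional n
          (cfc_star_mul_self_le_cfc_star_mul_self hf (hg.add continuousOn_const) hT hfg)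
    _ = R.traceFunctional n (cfc g (star T * T)) + c * n := by
        rw [cfc_add_const c g _
            (continuousOn_spectrum_of_nonneg hg (star_mul_self_nonneg T)) (.star_mul_self T),
          Algebra.algebraMap_eq_smul_one, map_add, map_smul, R.traceFunctional_one h1, smul_eq_mul]

lemma traceFunctional_cfc_le_const (h1 : φ 1 = 1) {f : ℝ → ℝ} {c M : ℝ}
    (hf : ContinuousOn f (Set.Ici 0))
    {T : (PiLp 2 fun _ : Fin n => R.H) →L[ℂ] PiLp 2 fun _ : Fin n => R.H} (hT : ‖T‖ ≤ M)
    (hfc : ∀ t ∈ Set.Icc 0 M, f (t ^ 2) ≤ c) :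
    R.traceFunctional n (cfc f (star T * T)) ≤ c * n := by
  have h := R.traceFunctional_cfc_le h1 hf (g := fun _ => 0) continuousOn_const hT
    (by simpa only [zero_add] using hfc)
  rwa [cfc_const_zero, map_zero, zero_add] at h

variable {X Y : (Matrix (Fin (n * r)) (Fin (n * r)) (MonoidAlgebra ℂ G))ˣ}
  {D : Fin r → Matrix (Fin n) (Fin n) (MonoidAlgebra ℂ G)} {C p q : ℝ}

lemma sum_traceFunctional_regLog_nonneg (hφ : ∀ g h : G, φ (h * g * h⁻¹) = φ g)
    (hL : SatisfiesLueck φ) (hint : HasIntegerCoeff (X.val * finBlockDiagonal n r _ D * Y.val))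
    (hC : 1 ≤ C) (hXY : ∀ i, ‖matAct R.π (![X.val, Y.val, X⁻¹.val, Y⁻¹.val] i)‖ ≤ C)
    (hp : 1 ≤ p) (hq : 0 ≤ q) :
    0 ≤ ∑ k, R.traceFunctional n (cfc (regLog (C ^ 2 * C ^ 2) p q)
      (star (matAct R.π (D k)) * matAct R.π (D k))) := by
  have hp0 : 0 ≤ p := zero_le_one.trans hp
  have hsq (i) := pow_le_pow_left₀ (norm_nonneg _) (hXY i) 2
  have hX : matAct R.π X⁻¹.val * matAct R.π X.val = 1 := by
    rw [← matAct_mul, X.inv_mul, matAct_one]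
  have hY : matAct R.π Y.val * matAct R.π Y⁻¹.val = 1 := by
    rw [← matAct_mul, Y.mul_inv, matAct_one]
  have hmem (a) := R.matAct_mem_matActStarSubalgebra (n := n * r) a
  rw [← R.traceFunctional_cfc_finBlockDiagonal D
    (continuousOn_regLog (by positivity) hp0 hq)]
  have hLueck := (R.coe_le_lnPlusQ_iff _ 0).1 (hL.zero_le_lnPlusQ hint R) _
    (regLog_one_sq_mem_lnPlusMajorants hp hq)
  have hpos := star_mul_self_nonneg (matAct R.π (X.val * finBlockDiagonal n r _ D * Y.val))
  calc (0 : ℝ) ≤ _ := hLueck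
    _ = R.traceFunctional (n * r) (cfc (regLog 1 p q) _) :=
        congrArg _ (cfc_congr fun s hs => by
          simp only [Real.sq_sqrt (spectrum_nonneg_of_nonneg hpos hs)])
    _ ≤ _ := by
        rw [matAct_mul, matAct_mul]
        exact apply_cfc_regLog_star_mul_self_le (R.monotone_traceFunctional _)
          (R.traceFunctional_mul_comm hφ) hX hY (hmem _) (hmem _) (hmem _) (hmem _)
          (one_le_pow₀ hC) (hsq 0) (hsq 1) (hsq 2) (hsq 3) hp hq

end GNSRep

theorem stmt15_general {G : Type*} [Group G] {n : ℕ}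
    (a : Matrix (Fin n) (Fin n) (MonoidAlgebra ℂ G))
    (ha : ∀ (i j : Fin n) (g : G), IsAlgebraic ℚ ((a i j).coeff g)) :
    ∃ m : ℝ, ∀ φ : G → ℂ, IsGroupTrace φ → φ 1 = 1 → SatisfiesLueck φ →
      ∀ R : GNSRep G φ, (m : EReal) ≤ R.lnPlusQ a := by
  obtain ⟨r, D, X, Y, ⟨k₀, rfl⟩, hint⟩ := exists_units_hasIntegerCoeff_mul_finBlockDiagonal_mul ha
  obtain ⟨C, hC, hXY⟩ := GNSRep.exists_norm_matAct_le ![X.val, Y.val, X⁻¹.val, Y⁻¹.val]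
  obtain ⟨M, hM, hDM⟩ := GNSRep.exists_norm_matAct_le D
  obtain ⟨c, hc⟩ : ∃ c, 1 + Real.log (C ^ 2 * C ^ 2) / 2 = c := ⟨_, rfl⟩
  refine ⟨-(c * n + (Finset.univ.erase k₀).card • ((Real.log M + c) * n)), fun φ hφ h1 hL R =>
    (R.coe_le_lnPlusQ_iff _ _).2 fun g hg => ?_⟩
  have hκ : 1 ≤ C ^ 2 * C ^ 2 := one_le_mul_of_one_le_of_one_le (one_le_pow₀ hC) (one_le_pow₀ hC)
  obtain ⟨p, q, hp, hq, hpq⟩ := exists_regLog_sq_le hg hκ hM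
  rw [hc] at hpq
  have hcont := continuousOn_regLog (κ := C ^ 2 * C ^ 2) (by positivity) (zero_le_one.trans hp) hq
  have hsum := R.sum_traceFunctional_regLog_nonneg hφ.2 hL hint hC (hXY φ R) hp hq
  have hk₀ := R.traceFunctional_cfc_le h1 hcont
    (hg.1.comp Real.continuous_sqrt.continuousOn fun s _ => Real.sqrt_nonneg s) (hDM φ R k₀)
    fun t ht => by simpa only [Function.comp_apply, Real.sqrt_sq ht.1] using (hpq t ht).1
  have hk := Finset.sum_le_card_nsmul (Finset.univ.erase k₀) _ _ fun k _ =>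
    R.traceFunctional_cfc_le_const h1 hcont (hDM φ R k) fun t ht => (hpq t ht).2
  rw [← Finset.add_sum_erase _ _ (Finset.mem_univ k₀)] at hsum
  simp only [Function.comp_def] at hk₀
  linarith

/-- for `a ∈ Mₙ(ℚ̄ F_∞)` (viewed in `Mₙ(ℂ F_∞)`: all coefficients of `a`
are algebraic numbers), there is a constant `m` such that `(φ ⊗ Trₙ)(ln₊|a|) ≥ m` for
every tracial state `φ` on `F_∞` satisfying Lück's condition. -/
theorem stmt15 (n : ℕ) (hn : 0 < n)
    (a : Matrix (Fin n) (Fin n) (MonoidAlgebra ℂ (FreeGroup ℕ)))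
    (halg : ∀ (i j : Fin n) (g : FreeGroup ℕ), IsAlgebraic ℚ ((a i j).coeff g)) :
    ∃ m : ℝ, ∀ φ : FreeGroup ℕ → ℂ, IsGroupTrace φ → φ 1 = 1 → SatisfiesLueck φ →
      ∀ R : GNSRep (FreeGroup ℕ) φ, (m : EReal) ≤ R.lnPlusQ a :=
  stmt15_general a halg

end
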